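/- For a permutation $\pi$ of $[n]=\{1,\dots,n\}$ written in one-line notation, an index $i\in[n-1]$ is a descent of $\pi$ if $\pi(i)>\pi(i+1)$, and an index $i\in\{2,\dots,n-1\}$ is a peak of $\pi$ if $\pi(i-1)<\pi(i)>\pi(i+1)$. A cyclic permutation of length $n$ is a permutation of $[n]$ whose cycle decomposition consists of a single $n$-cycle. Let $n\ge 1$ with $n\not\equiv 2\pmod 4$. Then for all integers $j,k\ge 0$, the number of cyclic permutations of length $n$ with exactly $j$ peaks and exactly $k$ descents equals the number of cyclic permutations of length $n$ with exactly $j$ peaks and exactly $n-1-k$ descents. -/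

import Mathlib

/-- The number of descents of a permutation of `Fin n`: the number of positions `i` which have a
successor position `i + 1` and at which `π (i + 1) < π i`. -/
def des (n : ℕ) (π : Equiv.Perm (Fin n)) : ℕ :=
  (Finset.univ.filter fun i : Fin n =>
    ∃ h : i.val + 1 < n, π ⟨i.val + 1, h⟩ < π i).card

/-- The number of peaks of a permutation of `Fin n`: the number of positions `i` which have both a
predecessor position `i - 1` and a successor position `i + 1` and at which
`π (i - 1) < π i` and `π (i + 1) < π i`. -/
def pk (n : ℕ) (π : Equiv.Perm (Fin n)) : ℕ :=
  (Finset.univ.filter fun i : Fin n =>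
    ∃ (_ : 1 ≤ i.val) (h : i.val + 1 < n),
      π ⟨i.val - 1, by omega⟩ < π i ∧ π ⟨i.val + 1, h⟩ < π i).card

/-- `π` is a single cycle through all of `Fin n`. For `n = 1` this includes the identity, whose
cycle decomposition is one cycle of length one. -/
def IsCyclicPerm (n : ℕ) (π : Equiv.Perm (Fin n)) : Prop :=
  π.IsCycleOn Set.univ

open Equiv.Perm

section Words

variable {n : ℕ}

/-- The itinerary of `s` under `c`, read through the labelling `w`, with the `k`-th letter
multiplied by `ε ^ k`. Itineraries are compared lexicographically. -/
def signedItinerary (ε : ℤ) (c : Equiv.Perm (Fin n)) (w : Fin n → ℤ) (s : Fin n) : Lex (ℕ → ℤ) :=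
  toLex fun k => ε ^ k * w ((c ^ k) s)

/-- The conjugate `σ * c * σ⁻¹` is increasing (for `ε = 1`) or decreasing (for `ε = -1`) on the
fibres of `b`. -/
def IsSignedMono (ε : ℤ) (b : Fin n → ℤ) (c σ : Equiv.Perm (Fin n)) : Prop :=
  ∀ s t, b (σ s) = b (σ t) → σ s < σ t → ε * (σ (c s) : ℕ) < ε * (σ (c t) : ℕ)

/-- A labelling is aperiodic along `c` if only trivial powers of `c` preserve it. -/
def IsAperiodic (c : Equiv.Perm (Fin n)) (w : Fin n → ℤ) : Prop :=
  ∀ t : ℕ, (∀ s, w ((c ^ t) s) = w s) → c ^ t = 1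

theorem signedItinerary_lt_iff {ε : ℤ} {c : Equiv.Perm (Fin n)} {w : Fin n → ℤ} {s t : Fin n} :
    signedItinerary ε c w s < signedItinerary ε c w t ↔
      ∃ k, (∀ j < k, ε ^ j * w ((c ^ j) s) = ε ^ j * w ((c ^ j) t)) ∧
        ε ^ k * w ((c ^ k) s) < ε ^ k * w ((c ^ k) t) :=
  Iff.rfl

theorem signedItinerary_lt_of_lt {ε : ℤ} {c : Equiv.Perm (Fin n)} {w : Fin n → ℤ} {s t : Fin n}
    (h : w s < w t) : signedItinerary ε c w s < signedItinerary ε c w t :=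
  signedItinerary_lt_iff.2 ⟨0, by simp, by simpa using h⟩

theorem pow_succ_apply_comm (c : Equiv.Perm (Fin n)) (k : ℕ) (s : Fin n) :
    (c ^ (k + 1)) s = (c ^ k) (c s) := by
  rw [pow_succ, Equiv.Perm.mul_apply]

theorem signedItinerary_lt_apply {ε : ℤ} (hε : ε = 1 ∨ ε = -1) {c : Equiv.Perm (Fin n)}
    {w : Fin n → ℤ} {s t : Fin n} (hw : w s = w t)
    (h : signedItinerary ε c w s < signedItinerary ε c w t) :
    (ε = 1 ∧ signedItinerary ε c w (c s) < signedItinerary ε c w (c t)) ∨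
      (ε = -1 ∧ signedItinerary ε c w (c t) < signedItinerary ε c w (c s)) := by
  simp only [signedItinerary_lt_iff] at h ⊢
  obtain ⟨k, hk, hlt⟩ := h
  cases k with
  | zero => simp [hw] at hlt
  | succ k =>
    have hk' : ∀ j < k, ε ^ (j + 1) * w ((c ^ j) (c s)) = ε ^ (j + 1) * w ((c ^ j) (c t)) := by
      intro j hj
      simpa only [pow_succ_apply_comm] using hk (j + 1) (by omega)
    rw [pow_succ_apply_comm, pow_succ_apply_comm] at hlt
    rcases hε with rfl | rfl
    · exact Or.inl ⟨rfl, k, by simpa using hk', by simpa using hlt⟩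
    · refine Or.inr ⟨rfl, k, fun j hj => ?_, ?_⟩
      · have := hk' j hj
        rw [pow_succ] at this
        linarith
      · rw [pow_succ] at hlt
        linarith

theorem signedItinerary_injective {ε : ℤ} (hε : ε ≠ 0) {c : Equiv.Perm (Fin n)}
    (hc : c.IsCycleOn Set.univ) {w : Fin n → ℤ} (hw : IsAperiodic c w) :
    Function.Injective (signedItinerary ε c w) := by
  intro s s' h
  have hk : ∀ k, w ((c ^ k) s) = w ((c ^ k) s') := fun k =>
    mul_left_cancel₀ (pow_ne_zero k hε) (congrFun (congrArg ofLex h) k)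
  have hc' : c.IsCycleOn (Finset.univ : Finset (Fin n)) := by simpa using hc
  obtain ⟨t, -, rfl⟩ := hc'.exists_pow_eq (Finset.mem_univ s) (Finset.mem_univ s')
  have := hw t fun u => by
    obtain ⟨k, -, rfl⟩ := hc'.exists_pow_eq (Finset.mem_univ s) (Finset.mem_univ u)
    rw [hk k, ← Equiv.Perm.mul_apply, ← Equiv.Perm.mul_apply, ← pow_add, ← pow_add, add_comm]
  rw [this, Equiv.Perm.one_apply]

theorem IsSignedMono.lt_of_signedItinerary_lt {ε : ℤ} (hε : ε = 1 ∨ ε = -1) {b : Fin n → ℤ}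
    (hb : Monotone b) {c σ : Equiv.Perm (Fin n)} (hσ : IsSignedMono ε b c σ) {s t : Fin n}
    (h : signedItinerary ε c (b ∘ σ) s < signedItinerary ε c (b ∘ σ) t) : σ s < σ t := by
  rw [signedItinerary_lt_iff] at h
  obtain ⟨k, hk, hlt⟩ := h
  induction k generalizing s t with
  | zero => exact hb.reflect_lt (by simpa using hlt)
  | succ k ih =>
    have h0 : b (σ s) = b (σ t) := by simpa using hk 0 (by omega)
    have hk' : ∀ j < k, ε ^ (j + 1) * (b ∘ σ) ((c ^ j) (c s)) =
        ε ^ (j + 1) * (b ∘ σ) ((c ^ j) (c t)) := by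
      intro j hj
      simpa only [pow_succ_apply_comm] using hk (j + 1) (by omega)
    rw [pow_succ_apply_comm, pow_succ_apply_comm] at hlt
    have hne : σ s ≠ σ t := fun h => by
      rw [σ.injective h] at hlt
      exact lt_irrefl _ hlt
    by_contra hnlt
    have hts := hσ t s h0.symm (lt_of_le_of_ne (not_lt.1 hnlt) hne.symm)
    rcases hε with rfl | rfl
    · have := ih (s := c s) (t := c t) (by simpa using hk') (by simpa using hlt)
      rw [Fin.lt_def] at this
      omega
    · have := ih (s := c t) (t := c s) (fun j hj => by
        have := hk' j hj
        rw [pow_succ] at this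
        linarith) (by
        rw [pow_succ] at hlt
        linarith)
      rw [Fin.lt_def] at this
      omega

theorem IsSignedMono.lt_pow_two_mul {ε : ℤ} (hε : ε = 1 ∨ ε = -1) {b : Fin n → ℤ}
    {c σ : Equiv.Perm (Fin n)} (hσ : IsSignedMono ε b c σ) (m : ℕ) {s t : Fin n}
    (hb : ∀ k, b (σ ((c ^ k) s)) = b (σ ((c ^ k) t))) (h : σ s < σ t) :
    σ ((c ^ (2 * m)) s) < σ ((c ^ (2 * m)) t) := by
  induction m generalizing s t with
  | zero => simpa using h
  | succ m ih =>
    rw [show 2 * (m + 1) = 2 * m + 1 + 1 by ring]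
    simp only [pow_succ_apply_comm]
    refine ih (fun k => by simpa only [pow_succ_apply_comm] using hb (k + 1 + 1)) ?_
    have h0 := hσ s t (by simpa using hb 0) h
    have h1 : b (σ (c s)) = b (σ (c t)) := by simpa using hb 1
    rcases hε with rfl | rfl
    · have := hσ (c s) (c t) h1 (by rw [Fin.lt_def]; omega)
      rw [Fin.lt_def]
      omega
    · have := hσ (c t) (c s) h1.symm (by rw [Fin.lt_def]; omega)
      rw [Fin.lt_def]
      omega

theorem IsSignedMono.pow_two_mul_eq_one {ε : ℤ} (hε : ε = 1 ∨ ε = -1) {b : Fin n → ℤ}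
    {c σ : Equiv.Perm (Fin n)} (hσ : IsSignedMono ε b c σ) {t : ℕ}
    (ht : ∀ s, b (σ ((c ^ (2 * t)) s)) = b (σ s)) : c ^ (2 * t) = 1 := by
  ext1 s
  have hword : ∀ k, b (σ ((c ^ k) ((c ^ (2 * t)) s))) = b (σ ((c ^ k) s)) := by
    intro k
    rw [← Equiv.Perm.mul_apply (c ^ k) (c ^ (2 * t)), ← pow_add, add_comm, pow_add,
      Equiv.Perm.mul_apply, ht]
  have hstep : ∀ m, (c ^ (2 * (t * (m + 1)))) s = (c ^ (2 * (t * m))) ((c ^ (2 * t)) s) := by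
    intro m
    rw [← Equiv.Perm.mul_apply, ← pow_add]
    congr 2
    ring
  rcases lt_trichotomy (σ s) (σ ((c ^ (2 * t)) s)) with h | h | h
  · refine absurd (strictMono_nat_of_lt_succ (f := fun m : ℕ => σ ((c ^ (2 * (t * m))) s))
      fun m => ?_).injective (not_injective_infinite_finite _)
    rw [hstep]
    exact hσ.lt_pow_two_mul hε _ (fun k => (hword k).symm) h
  · exact (σ.injective h).symm
  · refine absurd (strictAnti_nat_of_succ_lt (f := fun m : ℕ => σ ((c ^ (2 * (t * m))) s))
      fun m => ?_).injective (not_injective_infinite_finite _)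
    rw [hstep]
    exact hσ.lt_pow_two_mul hε _ hword h

theorem IsSignedMono.isAperiodic (hmod : ¬ n ≡ 2 [MOD 4]) {ε : ℤ} (hε : ε = 1 ∨ ε = -1)
    {b : Fin n → ℤ} {c σ : Equiv.Perm (Fin n)} (hc : c.IsCycleOn Set.univ)
    (hσ : IsSignedMono ε b c σ) : IsAperiodic c (b ∘ σ) := by
  intro t ht
  have hc' : c.IsCycleOn (Finset.univ : Finset (Fin n)) := by simpa using hc
  have h2 : c ^ (2 * t) = 1 := hσ.pow_two_mul_eq_one hε fun s => by
    rw [two_mul, pow_add, Equiv.Perm.mul_apply]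
    exact (ht _).trans (ht s)
  ext1 s
  have hdvd := (hc'.pow_apply_eq (Finset.mem_univ s)).1 (by rw [h2, Equiv.Perm.one_apply])
  rw [Finset.card_univ, Fintype.card_fin] at hdvd
  rcases Nat.even_or_odd' n with ⟨m, hm | hm⟩
  · have h4 : 4 ∣ n := by
      unfold Nat.ModEq at hmod
      omega
    obtain ⟨r, rfl⟩ : 2 ∣ t := by
      have := h4.trans hdvd
      omega
    rw [hσ.pow_two_mul_eq_one hε ht]
  · have hn : n ∣ t := Nat.Coprime.dvd_of_dvd_mul_left (by simp [hm]) hdvd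
    rw [(hc'.pow_apply_eq (Finset.mem_univ s)).2 (by simpa using hn), Equiv.Perm.one_apply]

theorem IsSignedMono.eq_of_comp_eq (hmod : ¬ n ≡ 2 [MOD 4]) {ε : ℤ} (hε : ε = 1 ∨ ε = -1)
    {b : Fin n → ℤ} (hb : Monotone b) {c σ τ : Equiv.Perm (Fin n)} (hc : c.IsCycleOn Set.univ)
    (hσ : IsSignedMono ε b c σ) (hτ : IsSignedMono ε b c τ) (h : b ∘ σ = b ∘ τ) : σ = τ := by
  have hmono : ∀ ρ : Equiv.Perm (Fin n), IsSignedMono ε b c ρ → b ∘ ρ = b ∘ σ →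
      Monotone (signedItinerary ε c (b ∘ σ) ∘ ρ.symm) := by
    intro ρ hρ hρσ i j hij
    by_contra hlt
    have := hρ.lt_of_signedItinerary_lt hε hb
      (s := ρ.symm j) (t := ρ.symm i) (by rw [hρσ]; exact not_le.1 hlt)
    simp only [Equiv.apply_symm_apply] at this
    exact absurd this (not_lt.2 hij)
  have hinj := signedItinerary_injective (ε := ε) (by rcases hε with rfl | rfl <;> simp) hc
    (hσ.isAperiodic hmod hε hc)
  have := Tuple.unique_monotone (hmono σ hσ rfl) (hmono τ hτ h.symm)
  exact Equiv.symm_bijective.injective (Equiv.ext fun i => hinj (congrFun this i))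

theorem exists_isSignedMono_comp_eq {ε : ℤ} (hε : ε = 1 ∨ ε = -1)
    {b : Fin n → ℤ} (hb : Monotone b) {c τ : Equiv.Perm (Fin n)} (hc : c.IsCycleOn Set.univ)
    (hτ : IsAperiodic c (b ∘ τ)) : ∃ σ, IsSignedMono ε b c σ ∧ b ∘ σ = b ∘ τ := by
  set w := b ∘ τ
  set key := signedItinerary ε c w
  have hinj : Function.Injective key :=
    signedItinerary_injective (by rcases hε with rfl | rfl <;> simp) hc hτ
  have hsort : StrictMono (key ∘ Tuple.sort key) :=
    (Tuple.monotone_sort key).strictMono_of_injective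
      (hinj.comp (Tuple.sort key).injective)
  set σ := (Tuple.sort key).symm with hσ
  have hlt : ∀ s t, σ s < σ t ↔ key s < key t := by
    intro s t
    rw [← hsort.lt_iff_lt]
    simp only [hσ, Function.comp_apply, Equiv.apply_symm_apply]
    exact Iff.rfl
  have hwσ : w ∘ σ.symm = b := by
    have hmono : Monotone (w ∘ σ.symm) := by
      intro i j hij
      by_contra h
      have := (hlt _ _).2 (signedItinerary_lt_of_lt (ε := ε) (c := c) (not_le.1 h))
      simp only [Equiv.apply_symm_apply] at this
      exact absurd this (not_lt.2 hij)
    exact Tuple.unique_monotone (f := b) (σ := τ * σ.symm) (τ := 1) hmono hb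
  have hbσ : b ∘ σ = w := by
    rw [← hwσ]
    ext s
    simp
  refine ⟨σ, fun s t hst h => ?_, hbσ⟩
  rcases signedItinerary_lt_apply hε (by rw [← hbσ]; exact hst) ((hlt s t).1 h) with
    ⟨rfl, h⟩ | ⟨rfl, h⟩
  · have := (hlt _ _).2 h
    rw [Fin.lt_def] at this
    omega
  · have := (hlt _ _).2 h
    rw [Fin.lt_def] at this
    omega

/-- Among the permutations conjugating a fixed full cycle, those whose conjugate is monotone of a
given sign on the fibres of `b` are in bijection with the aperiodic rearrangements of `b`. -/
theorem card_isSignedMono (hmod : ¬ n ≡ 2 [MOD 4]) {ε : ℤ} (hε : ε = 1 ∨ ε = -1)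
    {b : Fin n → ℤ} (hb : Monotone b) {c : Equiv.Perm (Fin n)} (hc : c.IsCycleOn Set.univ) :
    Nat.card {σ // IsSignedMono ε b c σ} =
      Nat.card {w : Fin n → ℤ // IsAperiodic c w ∧ ∃ τ : Equiv.Perm (Fin n), b ∘ τ = w} := by
  refine Nat.card_congr (Equiv.ofBijective
    (fun σ => ⟨b ∘ σ.1, σ.2.isAperiodic hmod hε hc, σ.1, rfl⟩) ⟨fun σ τ h => ?_, ?_⟩)
  · exact Subtype.ext (σ.2.eq_of_comp_eq hmod hε hb hc τ.2 (congrArg Subtype.val h))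
  · rintro ⟨_, hw, τ, rfl⟩
    obtain ⟨σ, hσ, h⟩ := exists_isSignedMono_comp_eq hε hb hc hw
    exact ⟨⟨σ, hσ⟩, Subtype.ext h⟩

end Words

section Descents

variable {n : ℕ}

/-- The set of descents of a permutation of `Fin n`. -/
def descents (π : Equiv.Perm (Fin n)) : Finset (Fin n) :=
  Finset.univ.filter fun i => ∃ h : i.val + 1 < n, π ⟨i.val + 1, h⟩ < π i

/-- The set of ascents of a permutation of `Fin n`. -/
def ascents (π : Equiv.Perm (Fin n)) : Finset (Fin n) :=
  Finset.univ.filter fun i => ∃ h : i.val + 1 < n, π i < π ⟨i.val + 1, h⟩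

/-- The number of positions `i` of `S` with `1 ≤ i`, `i + 1 < n` and `i - 1 ∉ S`. -/
def runStarts (S : Finset (Fin n)) : ℕ :=
  (Finset.univ.filter fun i : Fin n =>
    ∃ (_ : 1 ≤ i.val) (_ : i.val + 1 < n), (⟨i.val - 1, by omega⟩ : Fin n) ∉ S ∧ i ∈ S).card

/-- The labelling of positions by the blocks into which the positions in `S` cut `Fin n`. -/
def blockIndex (S : Finset (Fin n)) (i : Fin n) : ℤ :=
  (S.filter (· < i)).card

theorem blockIndex_monotone (S : Finset (Fin n)) : Monotone (blockIndex S) := by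
  intro i j hij
  unfold blockIndex
  exact_mod_cast Finset.card_le_card
    (Finset.monotone_filter_right S fun _ _ h => lt_of_lt_of_le h hij)

theorem blockIndex_lt_of_mem {S : Finset (Fin n)} {i j : Fin n} (hi : i ∈ S) (hij : i < j) :
    blockIndex S i < blockIndex S j := by
  unfold blockIndex
  refine Nat.cast_lt.2 (Finset.card_lt_card (Finset.ssubset_iff_of_subset
    (Finset.monotone_filter_right S fun _ _ h => lt_trans h hij) |>.2 ⟨i, ?_, ?_⟩))
  · simp [hi, hij]
  · simp

theorem blockIndex_succ_of_notMem {S : Finset (Fin n)} {i : Fin n} (hi : i ∉ S)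
    (h : i.val + 1 < n) : blockIndex S ⟨i.val + 1, h⟩ = blockIndex S i := by
  unfold blockIndex
  congr 2
  refine Finset.filter_congr fun j hj => ?_
  have : j ≠ i := fun h => hi (h ▸ hj)
  rw [Fin.lt_def, Fin.lt_def]
  rw [Ne, Fin.ext_iff] at this
  simp only
  omega

/-- Monotonicity on the blocks cut out by `S` may be checked at consecutive positions. -/
theorem isSignedMono_blockIndex_iff {ε : ℤ} {S : Finset (Fin n)} {c σ : Equiv.Perm (Fin n)} :
    IsSignedMono ε (blockIndex S) c σ ↔ ∀ (i : Fin n) (h : i.val + 1 < n), i ∉ S →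
      ε * ((σ * c * σ⁻¹) i : ℕ) < ε * ((σ * c * σ⁻¹) ⟨i.val + 1, h⟩ : ℕ) := by
  constructor
  · intro hσ i h hi
    simpa using hσ (σ⁻¹ i) (σ⁻¹ ⟨i.val + 1, h⟩)
      (by simpa using (blockIndex_succ_of_notMem hi h).symm)
      (by simp [Fin.lt_def])
  · intro h
    have main : ∀ (d : ℕ) (i : Fin n) (hd : i.val + d + 1 < n),
        blockIndex S i = blockIndex S ⟨i.val + d + 1, hd⟩ →
        ε * ((σ * c * σ⁻¹) i : ℕ) < ε * ((σ * c * σ⁻¹) ⟨i.val + d + 1, hd⟩ : ℕ) := by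
      intro d
      induction d with
      | zero =>
        intro i hd hb
        exact h i hd fun hi => hb.not_lt (blockIndex_lt_of_mem hi (by simp [Fin.lt_def]))
      | succ d ih =>
        intro i hd hb
        have hd' : i.val + d + 1 < n := by omega
        have h1 := blockIndex_monotone S
          (show i ≤ ⟨i.val + d + 1, hd'⟩ by rw [Fin.le_def]; simp only; omega)
        have h2 := blockIndex_monotone S
          (show (⟨i.val + d + 1, hd'⟩ : Fin n) ≤ ⟨i.val + (d + 1) + 1, hd⟩ by
            rw [Fin.le_def]; simp only; omega)
        refine (ih i hd' (by omega)).trans (h ⟨i.val + d + 1, hd'⟩ hd fun hi => ?_)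
        have := blockIndex_lt_of_mem hi
          (show (⟨i.val + d + 1, hd'⟩ : Fin n) < ⟨i.val + (d + 1) + 1, hd⟩ by
            rw [Fin.lt_def]; simp only; omega)
        omega
    intro s t hb hst
    obtain ⟨d, hd⟩ := Nat.exists_eq_add_of_lt (Fin.lt_def.1 hst)
    have ht : (⟨(σ s).val + d + 1, by omega⟩ : Fin n) = σ t := Fin.ext hd.symm
    have := main d (σ s) (by omega) (by rw [ht]; exact hb)
    rw [ht] at this
    simpa using this

theorem isSignedMono_one_iff {S : Finset (Fin n)} {c σ : Equiv.Perm (Fin n)} :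
    IsSignedMono 1 (blockIndex S) c σ ↔ descents (σ * c * σ⁻¹) ⊆ S := by
  rw [isSignedMono_blockIndex_iff]
  generalize σ * c * σ⁻¹ = π
  simp only [descents, Finset.subset_iff, Finset.mem_filter, Finset.mem_univ, true_and, one_mul,
    Nat.cast_lt, Fin.lt_def]
  refine forall_congr' fun i => ⟨fun h ⟨hi, hlt⟩ => ?_, fun h hi hS => ?_⟩
  · by_contra hS
    exact absurd (h hi hS) (by omega)
  · by_contra hlt
    refine hS (h ⟨hi, lt_of_le_of_ne (not_lt.1 hlt) fun he => ?_⟩)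
    have := congrArg Fin.val (π.injective (Fin.ext he))
    simp at this

theorem isSignedMono_neg_one_iff {S : Finset (Fin n)} {c σ : Equiv.Perm (Fin n)} :
    IsSignedMono (-1) (blockIndex S) c σ ↔ ascents (σ * c * σ⁻¹) ⊆ S := by
  rw [isSignedMono_blockIndex_iff]
  generalize σ * c * σ⁻¹ = π
  simp only [ascents, Finset.subset_iff, Finset.mem_filter, Finset.mem_univ, true_and, neg_mul,
    one_mul, neg_lt_neg_iff, Nat.cast_lt, Fin.lt_def]
  refine forall_congr' fun i => ⟨fun h ⟨hi, hlt⟩ => ?_, fun h hi hS => ?_⟩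
  · by_contra hS
    exact absurd (h hi hS) (by omega)
  · by_contra hlt
    refine hS (h ⟨hi, lt_of_le_of_ne (not_lt.1 hlt) fun he => ?_⟩)
    have := congrArg Fin.val (π.injective (Fin.ext he))
    simp at this

end Descents

section Counting

/-- Two finset-valued functions with equally many values inside each `S` are equidistributed. -/
theorem card_filter_eq_of_card_filter_subset {α β : Type*} [Fintype α] [DecidableEq β]
    {f g : α → Finset β}
    (h : ∀ S, (Finset.univ.filter fun a => f a ⊆ S).card =
      (Finset.univ.filter fun a => g a ⊆ S).card) (S : Finset β) :
    (Finset.univ.filter fun a => f a = S).card = (Finset.univ.filter fun a => g a = S).card := by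
  have key : ∀ (f : α → Finset β) (S : Finset β),
      (Finset.univ.filter fun a => f a ⊆ S).card =
        ∑ T ∈ S.powerset, (Finset.univ.filter fun a => f a = T).card := by
    intro f S
    rw [Finset.card_eq_sum_card_fiberwise (f := f) (t := S.powerset)]
    · refine Finset.sum_congr rfl fun T hT => ?_
      rw [Finset.filter_filter]
      congr 1
      refine Finset.filter_congr fun a _ => ⟨fun h => h.2, fun h => ⟨?_, h⟩⟩
      rw [h]
      exact Finset.mem_powerset.1 hT
    · intro a ha
      simpa using ha
  induction S using Finset.strongInduction with
  | H S ih =>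
    have hS := h S
    rw [key f, key g, ← Finset.sum_erase_add _ _ (Finset.mem_powerset_self S),
      ← Finset.sum_erase_add _ _ (Finset.mem_powerset_self S)] at hS
    rw [Finset.sum_congr rfl fun T hT => ih T ?_] at hS
    · omega
    · rw [Finset.mem_erase, Finset.mem_powerset] at hT
      exact hT.2.ssubset_of_ne hT.1

theorem card_filter_comp_eq_of_card_filter_subset {α β : Type*} [Fintype α] [Fintype β]
    [DecidableEq β] {f g : α → Finset β}
    (h : ∀ S, (Finset.univ.filter fun a => f a ⊆ S).card =
      (Finset.univ.filter fun a => g a ⊆ S).card) (Q : Finset β → Prop) [DecidablePred Q] :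
    (Finset.univ.filter fun a => Q (f a)).card = (Finset.univ.filter fun a => Q (g a)).card := by
  have key : ∀ f : α → Finset β, (Finset.univ.filter fun a => Q (f a)).card =
      ∑ S with Q S, (Finset.univ.filter fun a => f a = S).card := by
    intro f
    rw [Finset.card_eq_sum_card_fiberwise (f := f) (t := Finset.univ.filter Q)]
    · refine Finset.sum_congr rfl fun T hT => ?_
      rw [Finset.filter_filter]
      congr 1
      refine Finset.filter_congr fun a _ => ⟨fun h => h.2, fun h => ⟨?_, h⟩⟩
      rw [h]
      exact (Finset.mem_filter.1 hT).2
    · intro a ha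
      simpa using ha
  rw [key f, key g]
  exact Finset.sum_congr rfl fun S _ => card_filter_eq_of_card_filter_subset h S

theorem isConj_of_isCycleOn_univ {α : Type*} [Fintype α] {c π : Equiv.Perm α}
    (hc : c.IsCycleOn Set.univ) (hπ : π.IsCycleOn Set.univ) : IsConj c π := by
  classical
  rcases subsingleton_or_nontrivial α with h | h
  · rw [Subsingleton.elim c π]
  · have hcycle : ∀ ρ : Equiv.Perm α, ρ.IsCycleOn Set.univ →
        ρ.IsCycle ∧ ρ.support = Finset.univ := fun ρ hρ =>
      ⟨isCycle_iff_exists_isCycleOn.2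
        ⟨Set.univ, Set.nontrivial_univ, hρ, fun _ _ => Set.mem_univ _⟩,
        Finset.eq_univ_of_forall fun a =>
          mem_support.2 (hρ.apply_ne Set.nontrivial_univ (Set.mem_univ a))⟩
    exact (hcycle c hc).1.isConj (hcycle π hπ).1 (by rw [(hcycle c hc).2, (hcycle π hπ).2])

theorem isCycleOn_univ_conj_iff {α : Type*} {π τ : Equiv.Perm α} :
    (τ * π * τ⁻¹).IsCycleOn Set.univ ↔ π.IsCycleOn Set.univ := by
  have key : ∀ π τ : Equiv.Perm α, π.IsCycleOn Set.univ → (τ * π * τ⁻¹).IsCycleOn Set.univ :=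
    fun π τ h => by
      have := h.conj (g := τ)
      rwa [Set.image_univ_of_surjective τ.surjective] at this
  refine ⟨fun h => ?_, key π τ⟩
  have := key _ τ⁻¹ h
  rwa [show τ⁻¹ * (τ * π * τ⁻¹) * τ⁻¹⁻¹ = π by group] at this

/-- Counting full cycles with a property is, up to the order of a centralizer, counting
permutations conjugating a fixed full cycle to one with that property. -/
theorem card_conj_eq_card_isCycleOn_mul {α : Type*} [Finite α] {c : Equiv.Perm α}
    (hc : c.IsCycleOn Set.univ) (P : Equiv.Perm α → Prop) :
    Nat.card {σ : Equiv.Perm α // P (σ * c * σ⁻¹)} =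
      Nat.card {π : Equiv.Perm α // π.IsCycleOn Set.univ ∧ P π} *
        Nat.card {ρ : Equiv.Perm α // ρ * c = c * ρ} := by
  have := Fintype.ofFinite α
  have hconj : ∀ π : {π : Equiv.Perm α // π.IsCycleOn Set.univ ∧ P π},
      ∃ τ : Equiv.Perm α, τ * c * τ⁻¹ = π.1 := fun π =>
    isConj_iff.1 (isConj_of_isCycleOn_univ hc π.2.1)
  choose τ hτ using hconj
  have hcyc : ∀ σ : Equiv.Perm α, (σ * c * σ⁻¹).IsCycleOn Set.univ := fun σ =>
    isCycleOn_univ_conj_iff.2 hc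
  have hval : ∀ p : {π : Equiv.Perm α // π.IsCycleOn Set.univ ∧ P π} ×
      {ρ : Equiv.Perm α // ρ * c = c * ρ},
      τ p.1 * p.2.1 * c * (τ p.1 * p.2.1)⁻¹ = p.1.1 := by
    intro p
    rw [mul_assoc (τ p.1), p.2.2, ← hτ]
    group
  rw [← Nat.card_prod]
  refine Nat.card_congr (Equiv.symm (Equiv.ofBijective
    (fun p => ⟨τ p.1 * p.2.1, by rw [hval p]; exact p.1.2.2⟩) ⟨?_, ?_⟩))
  · intro p q h
    have h' : τ p.1 * p.2.1 = τ q.1 * q.2.1 := congrArg Subtype.val h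
    have h1 : p.1 = q.1 := Subtype.ext (by rw [← hval p, ← hval q, h'])
    refine Prod.ext h1 (Subtype.ext ?_)
    rw [h1] at h'
    exact mul_left_cancel h'
  · rintro ⟨σ, hσ⟩
    refine ⟨(⟨σ * c * σ⁻¹, hcyc σ, hσ⟩, ⟨(τ ⟨σ * c * σ⁻¹, hcyc σ, hσ⟩)⁻¹ * σ, ?_⟩), ?_⟩
    · have := hτ ⟨σ * c * σ⁻¹, hcyc σ, hσ⟩
      generalize τ ⟨σ * c * σ⁻¹, hcyc σ, hσ⟩ = ρ at this
      simp only at this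
      rw [mul_assoc, show σ * c = (σ * c * σ⁻¹) * σ by group, ← this]
      group
    · simp

end Counting

section Reversal

variable {n : ℕ}

/-- For `n ≢ 2 (mod 4)`, descent sets and ascent sets of full cycles are equidistributed. -/
theorem card_isCycleOn_descents_eq_ascents (hmod : ¬ n ≡ 2 [MOD 4])
    (Q : Finset (Fin n) → Prop) :
    Nat.card {π : Equiv.Perm (Fin n) // π.IsCycleOn Set.univ ∧ Q (descents π)} =
      Nat.card {π : Equiv.Perm (Fin n) // π.IsCycleOn Set.univ ∧ Q (ascents π)} := by
  classical
  obtain ⟨c, hc, -⟩ := (Finset.univ : Finset (Fin n)).exists_cycleOn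
  rw [Finset.coe_univ] at hc
  have hsub : ∀ S : Finset (Fin n),
      (Finset.univ.filter fun σ : Equiv.Perm (Fin n) => descents (σ * c * σ⁻¹) ⊆ S).card =
      (Finset.univ.filter fun σ : Equiv.Perm (Fin n) => ascents (σ * c * σ⁻¹) ⊆ S).card := by
    intro S
    simp only [← isSignedMono_one_iff, ← isSignedMono_neg_one_iff]
    rw [← Fintype.card_subtype, ← Fintype.card_subtype, ← Nat.card_eq_fintype_card,
      ← Nat.card_eq_fintype_card,
      card_isSignedMono hmod (Or.inl rfl) (blockIndex_monotone S) hc,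
      card_isSignedMono hmod (Or.inr rfl) (blockIndex_monotone S) hc]
  have h := card_filter_comp_eq_of_card_filter_subset hsub Q
  rw [← Fintype.card_subtype, ← Fintype.card_subtype, ← Nat.card_eq_fintype_card,
    ← Nat.card_eq_fintype_card,
    card_conj_eq_card_isCycleOn_mul hc fun π => Q (descents π),
    card_conj_eq_card_isCycleOn_mul hc fun π => Q (ascents π)] at h
  have : Nonempty {ρ : Equiv.Perm (Fin n) // ρ * c = c * ρ} := ⟨⟨1, by simp⟩⟩
  exact Nat.eq_of_mul_eq_mul_right Nat.card_pos h

theorem pk_eq_runStarts_descents (π : Equiv.Perm (Fin n)) : pk n π = runStarts (descents π) := by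
  unfold pk runStarts descents
  congr 1
  refine Finset.filter_congr fun i _ => exists_congr fun h1 => exists_congr fun h2 => ?_
  have hi : (⟨i.val - 1 + 1, by omega⟩ : Fin n) = i := Fin.ext (by simp only; omega)
  have hne : π ⟨i.val - 1, by omega⟩ ≠ π i := fun h => by
    have := congrArg Fin.val (π.injective h)
    simp only at this
    omega
  have h3 : i.val - 1 + 1 < n := by omega
  simp only [Finset.mem_filter, Finset.mem_univ, true_and, h2, h3, exists_true_left, hi, not_lt]
  rw [le_iff_lt_or_eq, or_iff_left hne]

theorem runStarts_ascents (π : Equiv.Perm (Fin n)) : runStarts (ascents π) =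
    (Finset.univ.filter fun i : Fin n => ∃ (_ : 1 ≤ i.val) (h : i.val + 1 < n),
      π i < π ⟨i.val - 1, by omega⟩ ∧ π i < π ⟨i.val + 1, h⟩).card := by
  unfold runStarts ascents
  congr 1
  refine Finset.filter_congr fun i _ => exists_congr fun h1 => exists_congr fun h2 => ?_
  have hi : (⟨i.val - 1 + 1, by omega⟩ : Fin n) = i := Fin.ext (by simp only; omega)
  have hne : π i ≠ π ⟨i.val - 1, by omega⟩ := fun h => by
    have := congrArg Fin.val (π.injective h)
    simp only at this
    omega
  have h3 : i.val - 1 + 1 < n := by omega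
  simp only [Finset.mem_filter, Finset.mem_univ, true_and, h2, h3, exists_true_left, hi, not_lt]
  rw [le_iff_lt_or_eq, or_iff_left hne]

theorem conj_revPerm_apply (π : Equiv.Perm (Fin n)) (i : Fin n) :
    (Fin.revPerm * π * Fin.revPerm⁻¹ : Equiv.Perm (Fin n)) i = (π i.rev).rev :=
  rfl

/-- Conjugation by the order reversal turns peaks into valleys. -/
theorem runStarts_ascents_conj_revPerm (π : Equiv.Perm (Fin n)) :
    runStarts (ascents (Fin.revPerm * π * Fin.revPerm⁻¹)) = pk n π := by
  rw [runStarts_ascents]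
  unfold pk
  simp only [conj_revPerm_apply, Fin.rev_lt_rev]
  refine Finset.card_bij' (fun i _ => i.rev) (fun i _ => i.rev) ?_ ?_ (by simp) (by simp)
  all_goals
    intro i hi
    simp only [Finset.mem_filter, Finset.mem_univ, true_and, Fin.rev_rev] at hi ⊢
    obtain ⟨h1, h2, h3, h4⟩ := hi
    refine ⟨by rw [Fin.val_rev]; omega, by rw [Fin.val_rev]; omega, ?_, ?_⟩
    · convert h4 using 2
      ext
      simp only [Fin.val_rev]
      omega
    · convert h3 using 2
      ext
      simp only [Fin.val_rev]
      omega

theorem des_add_card_ascents (hn : 1 ≤ n) (π : Equiv.Perm (Fin n)) :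
    des n π + (ascents π).card + 1 = n := by
  have hdisj : Disjoint (descents π) (ascents π) := by
    rw [Finset.disjoint_left]
    intro i hd ha
    simp only [descents, ascents, Finset.mem_filter, Finset.mem_univ, true_and] at hd ha
    exact lt_asymm hd.2 ha.2
  have hunion : descents π ∪ ascents π = Finset.univ.erase ⟨n - 1, by omega⟩ := by
    ext i
    simp only [descents, ascents, Finset.mem_union, Finset.mem_filter, Finset.mem_univ, true_and,
      Finset.mem_erase, and_true, ← exists_or, Ne, Fin.ext_iff]
    constructor
    · rintro ⟨h, -⟩
      omega
    · intro h
      refine ⟨by omega, lt_or_gt_of_ne fun he => ?_⟩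
      have := congrArg Fin.val (π.injective he)
      simp at this
  have := Finset.card_union_of_disjoint hdisj
  rw [hunion, Finset.card_erase_of_mem (Finset.mem_univ _), Finset.card_univ,
    Fintype.card_fin] at this
  change (descents π).card + _ + 1 = n
  omega

theorem card_ascents_conj_revPerm (π : Equiv.Perm (Fin n)) :
    (ascents (Fin.revPerm * π * Fin.revPerm⁻¹)).card = (ascents π).card := by
  unfold ascents
  simp only [conj_revPerm_apply, Fin.rev_lt_rev]
  refine Finset.card_bij' (fun i hi => ⟨n - 2 - i.val, by omega⟩)
    (fun i hi => ⟨n - 2 - i.val, by omega⟩) ?_ ?_ ?_ ?_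
  all_goals
    intro i hi
    simp only [Finset.mem_filter, Finset.mem_univ, true_and] at hi ⊢
    obtain ⟨h, hlt⟩ := hi
  · refine ⟨by omega, ?_⟩
    convert hlt using 2
    all_goals
      ext
      simp only [Fin.val_rev]
      omega
  · refine ⟨by omega, ?_⟩
    convert hlt using 2
    all_goals
      ext
      simp only [Fin.val_rev]
      omega
  · ext
    simp only
    omega
  · ext
    simp only
    omega

end Reversal

theorem stmt1 (n : ℕ) (hn : 1 ≤ n) (hmod : ¬ n ≡ 2 [MOD 4]) (j k : ℕ) :
    Nat.card {π : Equiv.Perm (Fin n) //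
        IsCyclicPerm n π ∧ pk n π = j ∧ des n π = k}
      = Nat.card {π : Equiv.Perm (Fin n) //
        IsCyclicPerm n π ∧ pk n π = j ∧ (des n π : ℤ) = (n : ℤ) - 1 - (k : ℤ)} := by
  have h := card_isCycleOn_descents_eq_ascents hmod fun S => runStarts S = j ∧ S.card = k
  simp only [← pk_eq_runStarts_descents] at h
  refine h.trans (Nat.card_congr ((MulAut.conj Fin.revPerm).toEquiv.subtypeEquiv fun π => ?_)).symm
  change _ ↔ (Fin.revPerm * π * Fin.revPerm⁻¹).IsCycleOn Set.univ ∧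
    runStarts (ascents (Fin.revPerm * π * Fin.revPerm⁻¹)) = j ∧
    (ascents (Fin.revPerm * π * Fin.revPerm⁻¹)).card = k
  rw [runStarts_ascents_conj_revPerm, card_ascents_conj_revPerm]
  have hcard := des_add_card_ascents hn π
  exact and_congr isCycleOn_univ_conj_iff.symm (and_congr_right fun _ => by omega)
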